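/- arXiv:2312.01955 — 3 statements merged into one kernel-verified Lean document; each statement's English description precedes it below -/
import Mathlib

section
/- Let V be a finite-dimensional complex normed vector space, J a finite index set, (v_j)_{j∈J} a linearly independent family in V, and ν : J → ℂ such that for all j, j' ∈ J, Re ν_j = Re ν_{j'} implies ν_j = ν_{j'}. Let ψ, ψ' : J → ℝ → V be two families of functions such that for every j ∈ J, e^{ν_j t} · ψ_j(t) → v_j and e^{ν_j t} · ψ'_j(t) → v_j as t → +∞ (i.e. ψ_j(t) = (v_j + o(1))e^{−ν_j t} and likewise for ψ'_j). Suppose S : J × J → ℂ satisfies ψ'_{j'}(t) = Σ_{j∈J} S(j,j') · ψ_j(t) for all t ∈ ℝ and all j' ∈ J. Then S(j,j) = 1 for every j ∈ J, and S(j,j') = 0 whenever j ≠ j' and Re ν_j ≤ Re ν_{j'}. -/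
/-!
Put `w j t = exp (ν j * t) • ψ j t`, so `w j t → v j`. Fixing a column `j'` and multiplying the
relation between the two families by `exp (ν j' * t)` writes a vector tending to `v j'` as a
combination of the `w j t` with coefficients `S j j' * exp ((ν j' - ν j) * t)`. A family converging
to a linearly independent one has convergent coordinates (`tendsto_coeff_of_tendsto_sum`), so each
coefficient tends to `1` if `j = j'` and to `0` otherwise. The case `j = j'` is `S j j = 1`; if
`j ≠ j'` and `Re ν j ≤ Re ν j'`, the exponential has modulus at least `1` for `t ≥ 0`, which
forces `S j j' = 0`.
-/

open Filter Topology in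
/-- Cramer's rule in the limit: if the columns of `M t` tend to the standard basis, then
convergence of `M t *ᵥ c t` implies convergence of `c t` to the same limit. -/
lemma tendsto_of_tendsto_mulVec {J : Type*} [Fintype J] [DecidableEq J]
    (M : ℝ → Matrix J J ℂ) (c : ℝ → J → ℂ) (a : J → ℂ)
    (hM : Tendsto M atTop (𝓝 1)) (hc : Tendsto (fun t => (M t).mulVec (c t)) atTop (𝓝 a)) :
    Tendsto c atTop (𝓝 a) := by
  have hdet : Tendsto (fun t => (M t).det) atTop (𝓝 1) := by
    simpa [Function.comp_def] using ((continuous_id.matrix_det).tendsto (1 : Matrix J J ℂ)).comp hM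
  have hadj : Tendsto (fun t => (M t).adjugate) atTop (𝓝 1) := by
    simpa [Function.comp_def] using ((continuous_id.matrix_adjugate).tendsto (1 : Matrix J J ℂ)).comp hM
  have hmul : Tendsto (fun t => (M t).adjugate.mulVec ((M t).mulVec (c t))) atTop (𝓝 a) := by
    have hcont : Continuous fun p : Matrix J J ℂ × (J → ℂ) => p.1.mulVec p.2 :=
      continuous_fst.matrix_mulVec continuous_snd
    simpa [Function.comp_def] using (hcont.tendsto (1, a)).comp (hadj.prodMk_nhds hc)
  have hlim := (hdet.inv₀ one_ne_zero).smul hmul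
  rw [inv_one, one_smul] at hlim
  refine hlim.congr' ?_
  filter_upwards [hdet.eventually_ne one_ne_zero] with t ht
  rw [Matrix.mulVec_mulVec, Matrix.adjugate_mul, Matrix.smul_mulVec, Matrix.one_mulVec,
    inv_smul_smul₀ ht]

open Filter Topology in
/-- Coordinates with respect to a family converging to a linearly independent family `v` converge
to the coordinates with respect to `v`; no a priori bound on the coordinates is required. -/
lemma tendsto_coeff_of_tendsto_sum {V : Type*} [NormedAddCommGroup V] [NormedSpace ℂ V]
    [FiniteDimensional ℂ V] {J : Type*} [Fintype J] [DecidableEq J]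
    (v : J → V) (hv : LinearIndependent ℂ v) (w : J → ℝ → V)
    (hw : ∀ j, Tendsto (w j) atTop (𝓝 (v j))) (c : ℝ → J → ℂ) (k : J)
    (hc : Tendsto (fun t => ∑ j, c t j • w j t) atTop (𝓝 (v k))) :
    Tendsto c atTop (𝓝 (Pi.single k 1)) := by
  -- A linear left inverse of `c ↦ ∑ j, c j • v j`; it sends `v j` to the standard basis vector.
  obtain ⟨L, hL⟩ := LinearMap.exists_leftInverse_of_injective
    (Fintype.linearCombination ℂ v)
    (LinearMap.ker_eq_bot.2 hv.fintypeLinearCombination_injective)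
  have hLv (j : J) : L (v j) = Pi.single j 1 := by
    simpa using LinearMap.congr_fun hL (Pi.single j 1)
  have hLc : Continuous L := L.continuous_of_finiteDimensional
  refine tendsto_of_tendsto_mulVec (fun t => Matrix.of fun i j => L (w j t) i) c _ ?_ ?_
  · refine tendsto_pi_nhds.2 fun i => tendsto_pi_nhds.2 fun j => ?_
    have h := ((continuous_apply i).tendsto _).comp ((hLc.tendsto _).comp (hw j))
    rw [hLv] at h
    simpa [Function.comp_def, Matrix.one_apply, Pi.single_apply] using h
  · have h := (hLc.tendsto _).comp hc
    rw [hLv] at h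
    refine h.congr fun t => ?_
    ext i
    simp [Matrix.mulVec, dotProduct, mul_comm]

/-- Unipotence of Stokes matrices: if two families of solutions have the prescribed
exponential asymptotics along the real line with linearly independent leading vectors,
then the change-of-basis matrix `S` has `1` on the diagonal and vanishes at `(j, j')`
whenever `j ≠ j'` and `Re ν_j ≤ Re ν_{j'}`. -/
theorem stmt7 {V : Type*} [NormedAddCommGroup V] [NormedSpace ℂ V]
    [FiniteDimensional ℂ V]
    {J : Type*} [Fintype J]
    (v : J → V) (hv : LinearIndependent ℂ v)
    (ν : J → ℂ) (hν : ∀ j j', (ν j).re = (ν j').re → ν j = ν j')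
    (ψ ψ' : J → ℝ → V)
    (hψ : ∀ j, Filter.Tendsto (fun t : ℝ => Complex.exp (ν j * t) • ψ j t)
      Filter.atTop (nhds (v j)))
    (hψ' : ∀ j, Filter.Tendsto (fun t : ℝ => Complex.exp (ν j * t) • ψ' j t)
      Filter.atTop (nhds (v j)))
    (S : J → J → ℂ)
    (hS : ∀ j' t, ψ' j' t = ∑ j, S j j' • ψ j t) :
    (∀ j, S j j = 1) ∧
      ∀ j j', j ≠ j' → (ν j).re ≤ (ν j').re → S j j' = 0 := by
  classical
  have key (k j : J) : Filter.Tendsto (fun t : ℝ => S j k * Complex.exp ((ν k - ν j) * t))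
      Filter.atTop (nhds ((Pi.single k 1 : J → ℂ) j)) := by
    have h := tendsto_coeff_of_tendsto_sum v hv
      (fun j t => Complex.exp (ν j * t) • ψ j t) hψ
      (fun t j => S j k * Complex.exp ((ν k - ν j) * t)) k ?_
    · exact tendsto_pi_nhds.1 h j
    · refine (hψ' k).congr fun t => ?_
      rw [hS, Finset.smul_sum]
      refine Finset.sum_congr rfl fun i _ => ?_
      rw [smul_smul, smul_smul, mul_assoc, ← Complex.exp_add, mul_comm]
      congr 3
      ring
  refine ⟨fun j => ?_, fun j k hjk hre => ?_⟩
  · have h := key j j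
    simp only [sub_self, zero_mul, Complex.exp_zero, mul_one, Pi.single_eq_same] at h
    exact tendsto_nhds_unique tendsto_const_nhds h
  · have h := (key k j).norm
    rw [Pi.single_eq_of_ne hjk, norm_zero] at h
    refine norm_le_zero_iff.1 (ge_of_tendsto h ?_)
    filter_upwards [Filter.eventually_ge_atTop 0] with t ht
    rw [norm_mul, Complex.norm_exp]
    refine le_mul_of_one_le_right (norm_nonneg _) (Real.one_le_exp ?_)
    simpa using mul_nonneg (sub_nonneg.2 hre) ht
end

section
/- Let L be a finite-dimensional complex Lie algebra equipped with a ℤ-grading: subspaces (L_n)_{n∈ℤ} with L = ⊕_n L_n, [L_m, L_n] ⊆ L_{m+n} for all m, n, and L_n = 0 for n > 3. Let h ∈ L₀ satisfy [h, x] = n·x for every x ∈ L_n and every n ∈ ℤ. Let η₁ ∈ L₁, η₂ ∈ L₂, η₃ ∈ L₃, and set X = η₁ + (1/2)η₂ + (1/3)η₃ − (1/12)[η₁, η₂]. Then ad X is nilpotent and exp(ad X)(−h) = −h + η₁ + η₂ + η₃. -/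
/-!
Since `X` has only components of degrees `1, 2, 3`, the operator `ad X` raises degrees, and degrees
above `3` vanish; so every homogeneous vector, hence every vector, is killed by some power of `ad X`,
and finite dimensionality makes `ad X` nilpotent. For the exponential, the grading element gives
`ad X (-h) = [h, X] = η₁ + η₂ + η₃ - [η₁, η₂] / 4`; all brackets landing in degrees above `3` vanish,
so `(ad X)² (-h) = [η₁, η₂] / 2` and `(ad X)³ (-h) = 0`. The series therefore stops after
the quadratic term, whose contribution `[η₁, η₂] / 4` cancels the correction in the linear one.
-/

/-- Bracketing with `a + b + c` raises degrees by at least `1`, and degrees above `3` vanish, so the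
`d`-th power of its adjoint action kills every homogeneous vector of degree at least `4 - d`. -/
lemma ad_pow_apply_eq_zero_of_mem {L : Type*} [LieRing L] [LieAlgebra ℂ L]
    (Vn : ℤ → Submodule ℂ L)
    (hbrack : ∀ m n : ℤ, ∀ x ∈ Vn m, ∀ y ∈ Vn n, ⁅x, y⁆ ∈ Vn (m + n))
    (htop : ∀ n : ℤ, 3 < n → Vn n = ⊥)
    (a b c : L) (ha : a ∈ Vn 1) (hb : b ∈ Vn 2) (hc : c ∈ Vn 3) (d : ℕ) :
    ∀ n : ℤ, 4 - (d : ℤ) ≤ n → ∀ x ∈ Vn n, ((LieAlgebra.ad ℂ L (a + b + c)) ^ d) x = 0 := by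
  induction d with
  | zero =>
    intro n hn x hx
    rw [htop n (by push_cast at hn; omega)] at hx
    simpa using hx
  | succ d ih =>
    intro n hn x hx
    push_cast at hn
    rw [pow_succ, Module.End.mul_apply, LieAlgebra.ad_apply, add_lie, add_lie, map_add, map_add,
      ih _ (by omega) _ (hbrack 1 n a ha x hx), ih _ (by omega) _ (hbrack 2 n b hb x hx),
      ih _ (by omega) _ (hbrack 3 n c hc x hx)]
    simp

/-- The `G₂` case of the conjugation identity: in a finite-dimensional ℤ-graded complex
Lie algebra with no components in degrees `> 3`, with grading element `h` and
`η_i` of degree `i`, the element `X = η₁ + η₂/2 + η₃/3 − [η₁,η₂]/12` has nilpotent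
adjoint action and `exp(ad X)(−h) = −h + η₁ + η₂ + η₃` (the exponential being the finite
sum `Σ_{m<n} (ad X)^m / m!` for any `n` with `(ad X)^n = 0`). -/
theorem stmt10 {L : Type*} [LieRing L] [LieAlgebra ℂ L] [FiniteDimensional ℂ L]
    (Vn : ℤ → Submodule ℂ L) (hV : DirectSum.IsInternal Vn)
    (hbrack : ∀ m n : ℤ, ∀ x ∈ Vn m, ∀ y ∈ Vn n, ⁅x, y⁆ ∈ Vn (m + n))
    (htop : ∀ n : ℤ, 3 < n → Vn n = ⊥)
    (h : L) (hh0 : h ∈ Vn 0)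
    (hgrad : ∀ n : ℤ, ∀ x ∈ Vn n, ⁅h, x⁆ = (n : ℂ) • x)
    (η₁ η₂ η₃ : L) (h1 : η₁ ∈ Vn 1) (h2 : η₂ ∈ Vn 2) (h3 : η₃ ∈ Vn 3)
    (X : L)
    (hX : X = η₁ + (2 : ℂ)⁻¹ • η₂ + (3 : ℂ)⁻¹ • η₃ - (12 : ℂ)⁻¹ • ⁅η₁, η₂⁆) :
    IsNilpotent (LieAlgebra.ad ℂ L X) ∧
    ∀ n : ℕ, (LieAlgebra.ad ℂ L X) ^ n = 0 →
      ∑ m ∈ Finset.range n,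
          ((m.factorial : ℂ)⁻¹) • (((LieAlgebra.ad ℂ L X) ^ m) (-h))
        = -h + η₁ + η₂ + η₃ := by
  have hη : ⁅η₁, η₂⁆ ∈ Vn 3 := hbrack 1 2 _ h1 _ h2
  have hzero : ∀ m n : ℤ, 3 < m + n → ∀ x ∈ Vn m, ∀ y ∈ Vn n, ⁅x, y⁆ = 0 := by
    intro m n hmn x hx y hy
    have := hbrack m n x hx y hy
    rwa [htop _ hmn, Submodule.mem_bot] at this
  constructor
  · have hX' : X = η₁ + (2 : ℂ)⁻¹ • η₂ + ((3 : ℂ)⁻¹ • η₃ - (12 : ℂ)⁻¹ • ⁅η₁, η₂⁆) := by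
      rw [hX]; abel
    have key := ad_pow_apply_eq_zero_of_mem Vn hbrack htop _ _ _ h1
      ((Vn 2).smul_mem (2 : ℂ)⁻¹ h2)
      ((Vn 3).sub_mem ((Vn 3).smul_mem (3 : ℂ)⁻¹ h3) ((Vn 3).smul_mem (12 : ℂ)⁻¹ hη))
    rw [← hX'] at key
    rw [Module.End.isNilpotent_iff_of_finite]
    intro x
    have hx : x ∈ ⨆ n, Vn n := by rw [hV.submodule_iSup_eq_top]; trivial
    induction hx using Submodule.iSup_induction' with
    | mem n x hx => exact ⟨(4 - n).toNat, key _ n (by omega) x hx⟩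
    | zero => exact ⟨0, by simp⟩
    | add x y _ _ hx hy =>
      obtain ⟨k, hk⟩ := hx
      obtain ⟨l, hl⟩ := hy
      refine ⟨k + l, ?_⟩
      rw [map_add, Module.End.pow_map_zero_of_le (Nat.le_add_right k l) hk,
        Module.End.pow_map_zero_of_le (Nat.le_add_left l k) hl, add_zero]
  · intro n hn
    have e1 : LieAlgebra.ad ℂ L X (-h) = η₁ + η₂ + η₃ - (4 : ℂ)⁻¹ • ⁅η₁, η₂⁆ := by
      rw [LieAlgebra.ad_apply, lie_neg, lie_skew, hX, lie_sub, lie_add, lie_add, lie_smul,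
        lie_smul, lie_smul, hgrad 1 _ h1, hgrad 2 _ h2, hgrad 3 _ h3, hgrad 3 _ hη]
      push_cast
      module
    have e2 : LieAlgebra.ad ℂ L X (η₁ + η₂ + η₃ - (4 : ℂ)⁻¹ • ⁅η₁, η₂⁆)
        = (2 : ℂ)⁻¹ • ⁅η₁, η₂⁆ := by
      have s : ⁅η₂, η₁⁆ = -⁅η₁, η₂⁆ := (lie_skew _ _).symm
      rw [LieAlgebra.ad_apply, hX]
      simp only [lie_add, lie_sub, add_lie, sub_lie, lie_smul, smul_lie, lie_self, s,
        hzero 1 3 (by norm_num) _ h1 _ h3, hzero 1 3 (by norm_num) _ h1 _ hη,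
        hzero 2 3 (by norm_num) _ h2 _ h3, hzero 2 3 (by norm_num) _ h2 _ hη,
        hzero 3 1 (by norm_num) _ h3 _ h1, hzero 3 1 (by norm_num) _ hη _ h1,
        hzero 3 2 (by norm_num) _ h3 _ h2, hzero 3 2 (by norm_num) _ hη _ h2,
        hzero 3 3 (by norm_num) _ h3 _ hη, hzero 3 3 (by norm_num) _ hη _ h3]
      module
    have e3 : LieAlgebra.ad ℂ L X ((2 : ℂ)⁻¹ • ⁅η₁, η₂⁆) = 0 := by
      rw [LieAlgebra.ad_apply, hX]
      simp only [add_lie, sub_lie, lie_smul, smul_lie, lie_self,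
        hzero 1 3 (by norm_num) _ h1 _ hη, hzero 2 3 (by norm_num) _ h2 _ hη,
        hzero 3 3 (by norm_num) _ h3 _ hη]
      simp
    have p3 : ((LieAlgebra.ad ℂ L X) ^ 3) (-h) = 0 := by
      simp only [pow_succ, pow_zero, one_mul, Module.End.mul_apply, e1, e2, e3]
    -- Terms with `m ≥ n` and terms with `m ≥ 3` vanish, so the sum over `m < n` may be replaced
    -- by the sum over `m < 3`, whichever of `n` and `3` is larger.
    have t1 := Finset.sum_subset
      (f := fun m : ℕ ↦ ((m.factorial : ℂ)⁻¹) • (((LieAlgebra.ad ℂ L X) ^ m) (-h)))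
      (Finset.range_mono (Nat.le_add_right n 3)) (by
        intro m _ hm
        have hm' : n ≤ m := by simpa using hm
        simp [pow_eq_zero_of_le hm' hn])
    have t2 := Finset.sum_subset
      (f := fun m : ℕ ↦ ((m.factorial : ℂ)⁻¹) • (((LieAlgebra.ad ℂ L X) ^ m) (-h)))
      (Finset.range_mono (Nat.le_add_left 3 n)) (by
        intro m _ hm
        have hm' : 3 ≤ m := by simpa using hm
        simp only [Module.End.pow_map_zero_of_le hm' p3, smul_zero])
    rw [t1, ← t2]
    simp only [Finset.sum_range_succ, Finset.sum_range_zero, pow_succ, pow_zero, one_mul,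
      Module.End.mul_apply, Module.End.one_apply, e1, e2, Nat.factorial]
    push_cast
    module
end

section
/- Let I be a finite index set, B : I → I → ℕ, μ ∈ ℂ, r a positive integer, D : I → ℂ, φ : I → ℂ, and Q, Q̃ : I → (ℂ → ℂ) functions. For s ∈ I define P_s : ℂ → ℂ by P_s(λ) = ∏_{j∈I} ∏_{u=0}^{B(s,j)−1} Q_j( exp( ((B(s,j) − 1 − 2u)/r)·μ ) · λ ). Assume the QQ-system holds: for all s ∈ I and all λ ∈ ℂ, P_s(λ) = e^{φ_s}·Q_s(e^{D_s μ} λ)·Q̃_s(e^{−D_s μ} λ) − e^{−φ_s}·Q_s(e^{−D_s μ} λ)·Q̃_s(e^{D_s μ} λ). Then for every s ∈ I and every λ* ∈ ℂ with Q_s(λ*) = 0, the Bethe equation holds in the form: e^{−φ_s}·P_s(e^{D_s μ} λ*)·Q_s(e^{−2 D_s μ} λ*) + e^{φ_s}·P_s(e^{−D_s μ} λ*)·Q_s(e^{2 D_s μ} λ*) = 0. -/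
/-- The QQ-system implies the Bethe equations at every zero `λ*` of `Q_s`. -/
theorem stmt11 {I : Type*} [Fintype I]
    (B : I → I → ℕ) (μ : ℂ) (r : ℕ) (hr : 0 < r)
    (D : I → ℂ) (φ : I → ℂ) (Q Qt : I → ℂ → ℂ)
    (P : I → ℂ → ℂ)
    (hP : ∀ s lam, P s lam =
      ∏ j, ∏ u ∈ Finset.range (B s j),
        Q j (Complex.exp ((((B s j : ℂ) - 1 - 2 * (u : ℂ)) / (r : ℂ)) * μ) * lam))
    (hQQ : ∀ s lam, P s lam =
      Complex.exp (φ s) * Q s (Complex.exp (D s * μ) * lam) *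
          Qt s (Complex.exp (-(D s) * μ) * lam)
        - Complex.exp (-(φ s)) * Q s (Complex.exp (-(D s) * μ) * lam) *
          Qt s (Complex.exp (D s * μ) * lam)) :
    ∀ s : I, ∀ lam : ℂ, Q s lam = 0 →
      Complex.exp (-(φ s)) * P s (Complex.exp (D s * μ) * lam) *
          Q s (Complex.exp (-(2 * D s) * μ) * lam)
        + Complex.exp (φ s) * P s (Complex.exp (-(D s) * μ) * lam) *
          Q s (Complex.exp ((2 * D s) * μ) * lam) = 0 := by
  intro s lam h0
  have h1 : Complex.exp (D s * μ) * (Complex.exp (D s * μ) * lam)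
      = Complex.exp ((2 * D s) * μ) * lam := by
    rw [← mul_assoc, ← Complex.exp_add]; ring_nf
  have h2 : Complex.exp (-(D s) * μ) * (Complex.exp (-(D s) * μ) * lam)
      = Complex.exp (-(2 * D s) * μ) * lam := by
    rw [← mul_assoc, ← Complex.exp_add]; ring_nf
  have h3 : Complex.exp (-(D s) * μ) * (Complex.exp (D s * μ) * lam) = lam := by
    rw [← mul_assoc, ← Complex.exp_add]; simp
  have h4 : Complex.exp (D s * μ) * (Complex.exp (-(D s) * μ) * lam) = lam := by
    rw [← mul_assoc, ← Complex.exp_add]; simp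
  -- In the QQ-system at the two shifted points, one term carries the factor `Q s lam = 0`;
  -- the surviving terms share the factor `Qt s lam` and cancel in the sum.
  rw [hQQ s (Complex.exp (D s * μ) * lam), hQQ s (Complex.exp (-(D s) * μ) * lam),
    h1, h2, h3, h4, h0]
  ring
end
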